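/- arXiv:1503.02958 — 2 statements merged into one kernel-verified Lean document; each statement's English description precedes it below -/
import Mathlib

section
/- Sequential derivatives of the relaxation solution: let 0 < α < 1, B ∈ ℝ, and y(x) = E_α(−B x^α). Then for every n ≥ 1 and every x > 0 the Miller-Ross sequential fractional derivative satisfies D^{nα} y(x) = (−B)^n · E_α(−B x^α), and consequently D^{nα} y(0) = (−B)^n (as the limit of D^{nα} y(x) as x → 0⁺). -/
/-!
The Caputo derivative acts on powers by `D^α ξ^{αk} = Γ(αk+1)/Γ(α(k-1)+1) · ξ^{α(k-1)}` for
`k ≥ 1`, by the Beta integral, and kills constants. Applied termwise to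
`E_α(-B ξ^α) = ∑ (-B)^k ξ^{αk}/Γ(αk+1)` it shifts the series by one index, hence multiplies the
function by `-B` (`caputo_relaxation`). The claim follows by induction on `n`, because `caputo` at
`x > 0` only sees the values of the function on `(0, ∞)`.

Termwise differentiation (`hasDerivAt_mittagLeffler`) and the exchange of sum and integral both rest
on the everywhere convergence of the Mittag-Leffler series (`summable_mittagLeffler`). This comes
from the ratio test and the bound `Γ(s) ≤ 2 s^{-α} Γ(s+α)`, a consequence of the
log-convexity of `Γ` (`Gamma_le_rpow_mul_Gamma_add`).
-/

open Real MeasureTheory Filter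

/-- The Caputo fractional derivative of order `α` of `y : ℝ → ℝ`. -/
noncomputable def caputo (α : ℝ) (y : ℝ → ℝ) (x : ℝ) : ℝ :=
  (1 / Real.Gamma (1 - α)) * ∫ ξ in (0:ℝ)..x, deriv y ξ * (x - ξ) ^ (-α)

/-- The Miller-Ross sequential fractional derivative `D^{nα}`: the `n`-fold
composition of the Caputo derivative `D^α` with itself. -/
noncomputable def millerRoss (α : ℝ) (n : ℕ) (y : ℝ → ℝ) : ℝ → ℝ :=
  (caputo α)^[n] y

/-- The one-parameter Mittag-Leffler function `E_α(x) = ∑ x^n/Γ(αn+1)`. -/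
noncomputable def mittagLeffler (α x : ℝ) : ℝ :=
  ∑' n : ℕ, x ^ n / Real.Gamma (α * n + 1)

/-! ### Convergence of the Mittag-Leffler series -/

/-- Log-convexity applied to `s + 1 = α (s + α) + (1 - α) (s + α + 1)`, combined with the functional
equation of `Γ`. -/
lemma Gamma_le_rpow_mul_Gamma_add {α s : ℝ} (hα0 : 0 < α) (hα1 : α < 1) (hs : 1 ≤ s) :
    Real.Gamma s ≤ 2 * s ^ (-α) * Real.Gamma (s + α) := by
  have hs0 : 0 < s := by linarith
  have hsα : 0 < s + α := by linarith
  have hG : 0 < Real.Gamma (s + α) := Real.Gamma_pos_of_pos hsα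
  have h := Real.Gamma_mul_add_mul_le_rpow_Gamma_mul_rpow_Gamma (s := s + α) (t := s + α + 1)
    (a := α) (b := 1 - α) hsα (by linarith) hα0 (by linarith) (by ring)
  rw [show α * (s + α) + (1 - α) * (s + α + 1) = s + 1 by ring, Real.Gamma_add_one hs0.ne',
    Real.Gamma_add_one hsα.ne', Real.mul_rpow hsα.le hG.le, mul_left_comm, ← Real.rpow_add hG,
    show α + (1 - α) = 1 by ring, Real.rpow_one] at h
  have h2 : (s + α) ^ (1 - α) ≤ 2 * (s * s ^ (-α)) := by
    calc (s + α) ^ (1 - α) ≤ (2 * s) ^ (1 - α) :=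
          Real.rpow_le_rpow hsα.le (by linarith) (by linarith)
      _ = 2 ^ (1 - α) * (s * s ^ (-α)) := by
          rw [Real.mul_rpow (by norm_num) hs0.le, sub_eq_add_neg 1 α, Real.rpow_add hs0,
            Real.rpow_one]
      _ ≤ 2 * (s * s ^ (-α)) := by
          gcongr
          calc (2 : ℝ) ^ (1 - α) ≤ 2 ^ (1 : ℝ) :=
                Real.rpow_le_rpow_of_exponent_le (by norm_num) (by linarith)
            _ = 2 := Real.rpow_one 2
  refine le_of_mul_le_mul_left (a := s) ?_ hs0
  calc s * Real.Gamma s ≤ (s + α) ^ (1 - α) * Real.Gamma (s + α) := h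
    _ ≤ 2 * (s * s ^ (-α)) * Real.Gamma (s + α) := by gcongr
    _ = _ := by ring

lemma Gamma_mul_nat_add_one_pos {α : ℝ} (hα0 : 0 < α) (n : ℕ) :
    0 < Real.Gamma (α * n + 1) :=
  Real.Gamma_pos_of_pos (by positivity)

lemma summable_mittagLeffler_of_pos {α R : ℝ} (hα0 : 0 < α) (hα1 : α < 1) (hR : 0 < R) :
    Summable fun n : ℕ => R ^ n / Real.Gamma (α * n + 1) := by
  have hpos : ∀ n : ℕ, 0 < R ^ n / Real.Gamma (α * n + 1) := fun n =>
    div_pos (pow_pos hR n) (Gamma_mul_nat_add_one_pos hα0 n)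
  refine summable_of_ratio_test_tendsto_lt_one zero_lt_one
    (Eventually.of_forall fun n => (hpos n).ne') ?_
  have hlim : Tendsto (fun n : ℕ => R * (2 * (α * n + 1) ^ (-α))) atTop (nhds 0) := by
    have h1 : Tendsto (fun n : ℕ => α * (n : ℝ) + 1) atTop atTop :=
      tendsto_atTop_add_const_right _ _ (tendsto_natCast_atTop_atTop.const_mul_atTop hα0)
    simpa using (((tendsto_rpow_neg_atTop hα0).comp h1).const_mul 2).const_mul R
  refine squeeze_zero (fun n => by positivity) (fun n => ?_) hlim
  rw [Real.norm_of_nonneg (hpos _).le, Real.norm_of_nonneg (hpos _).le, div_le_iff₀ (hpos n)]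
  have hs : (1 : ℝ) ≤ α * n + 1 := by
    have : 0 ≤ α * (n : ℝ) := by positivity
    linarith
  have h := Gamma_le_rpow_mul_Gamma_add hα0 hα1 hs
  have hG := Gamma_mul_nat_add_one_pos hα0 n
  have hG' := Gamma_mul_nat_add_one_pos hα0 (n + 1)
  have e : α * ((n + 1 : ℕ) : ℝ) + 1 = α * n + 1 + α := by push_cast; ring
  rw [e] at hG' ⊢
  rw [div_le_iff₀ hG', pow_succ]
  calc R ^ n * R = R ^ n * R / Real.Gamma (α * n + 1) * Real.Gamma (α * n + 1) := by
        field_simp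
    _ ≤ R ^ n * R / Real.Gamma (α * n + 1) *
        (2 * (α * n + 1) ^ (-α) * Real.Gamma (α * n + 1 + α)) := by gcongr
    _ = _ := by ring

lemma summable_mittagLeffler {α : ℝ} (hα0 : 0 < α) (hα1 : α < 1) (z : ℝ) :
    Summable fun n : ℕ => z ^ n / Real.Gamma (α * n + 1) := by
  refine Summable.of_norm_bounded
    (summable_mittagLeffler_of_pos hα0 hα1 (R := |z| + 1) (by positivity)) fun n => ?_
  have hG := Gamma_mul_nat_add_one_pos hα0 n
  rw [norm_div, norm_pow, Real.norm_of_nonneg hG.le, Real.norm_eq_abs]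
  gcongr
  linarith

/-! ### Termwise differentiation -/

/-- On the ball of radius `R = |z| + 1` the `n`-th differentiated term is dominated by
`(2R)^n/Γ(αn+1)`, since `n ≤ 2^n` and `R ≥ 1`. -/
lemma hasDerivAt_mittagLeffler {α : ℝ} (hα0 : 0 < α) (hα1 : α < 1) (z : ℝ) :
    HasDerivAt (mittagLeffler α)
      (∑' m : ℕ, ((m : ℝ) + 1) * z ^ m / Real.Gamma (α * (m + 1) + 1)) z := by
  set R : ℝ := |z| + 1 with hR
  have hR1 : 1 ≤ R := by have := abs_nonneg z; linarith
  have hu : Summable fun n : ℕ => (2 * R) ^ n / Real.Gamma (α * n + 1) :=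
    summable_mittagLeffler hα0 hα1 _
  have hbound : ∀ (n : ℕ) (y : ℝ), y ∈ Metric.ball (0 : ℝ) R →
      ‖(n : ℝ) * y ^ (n - 1) / Real.Gamma (α * n + 1)‖ ≤ (2 * R) ^ n / Real.Gamma (α * n + 1) := by
    intro n y hy
    have hG := Gamma_mul_nat_add_one_pos hα0 n
    have hy' : |y| ≤ R := by simpa using (Metric.mem_ball.1 hy).le
    rw [norm_div, norm_mul, norm_pow, Real.norm_of_nonneg hG.le, Real.norm_eq_abs, Real.norm_eq_abs,
      Nat.abs_cast, mul_pow]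
    gcongr
    · exact_mod_cast n.lt_two_pow_self.le
    · calc |y| ^ (n - 1) ≤ R ^ (n - 1) := by gcongr
        _ ≤ R ^ n := pow_le_pow_right₀ hR1 (Nat.sub_le n 1)
  have hz : z ∈ Metric.ball (0 : ℝ) R := by simp [hR]
  have key := hasDerivAt_tsum_of_isPreconnected hu Metric.isOpen_ball
    (convex_ball (0 : ℝ) R).isPreconnected
    (g := fun (n : ℕ) (y : ℝ) => y ^ n / Real.Gamma (α * n + 1))
    (g' := fun (n : ℕ) (y : ℝ) => (n : ℝ) * y ^ (n - 1) / Real.Gamma (α * n + 1))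
    (fun n y _ => (hasDerivAt_pow n y).div_const _) hbound hz
    (summable_mittagLeffler hα0 hα1 z) hz
  have hsum : Summable fun n : ℕ => (n : ℝ) * z ^ (n - 1) / Real.Gamma (α * n + 1) :=
    Summable.of_norm_bounded hu fun n => hbound n z hz
  rw [hsum.tsum_eq_zero_add] at key
  exact HasDerivAt.congr_deriv (f := mittagLeffler α) key (by simp)

lemma mittagLeffler_zero (α : ℝ) : mittagLeffler α 0 = 1 := by
  rw [mittagLeffler, tsum_eq_single 0 fun n hn => by simp [hn]]
  simp

/-- The derivative of the relaxation solution, with the factor `α(m+1)` absorbed by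
`Γ(s+1) = s Γ(s)`. -/
lemma deriv_relaxation {α : ℝ} (B : ℝ) (hα0 : 0 < α) (hα1 : α < 1) {ξ : ℝ} (hξ : 0 < ξ) :
    deriv (fun ξ => mittagLeffler α (-B * ξ ^ α)) ξ =
      ∑' m : ℕ, (-B) ^ (m + 1) / Real.Gamma (α * (m + 1)) * ξ ^ (α * (m + 1) - 1) := by
  have h1 : HasDerivAt (fun ξ : ℝ => -B * ξ ^ α) (-B * (α * ξ ^ (α - 1))) ξ :=
    (Real.hasDerivAt_rpow_const (Or.inl hξ.ne')).const_mul _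
  have h2 := (hasDerivAt_mittagLeffler hα0 hα1 (-B * ξ ^ α)).comp ξ h1
  have h3 := h2.deriv
  rw [Function.comp_def] at h3
  rw [h3, ← tsum_mul_right]
  congr 1
  ext m
  have hs : 0 < α * ((m : ℝ) + 1) := by positivity
  have hG := Real.Gamma_pos_of_pos hs
  have e : ξ ^ (α * ((m : ℝ) + 1) - 1) = (ξ ^ α) ^ m * ξ ^ (α - 1) := by
    rw [← Real.rpow_natCast, ← Real.rpow_mul hξ.le, ← Real.rpow_add hξ]
    congr 1; ring
  rw [Real.Gamma_add_one hs.ne', e, mul_pow, pow_succ]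
  field_simp

/-! ### The Beta integral on `[0, x]` -/

/-- The Beta integral over `[0, x]`. -/
lemma integral_rpow_mul_sub_rpow {a b x : ℝ} (ha : 0 < a) (hb : 0 < b) (hx : 0 < x) :
    ∫ ξ in (0 : ℝ)..x, ξ ^ (a - 1) * (x - ξ) ^ (b - 1) =
      x ^ (a + b - 1) * (Real.Gamma a * Real.Gamma b / Real.Gamma (a + b)) := by
  have h := Complex.betaIntegral_scaled a b hx
  rw [Complex.betaIntegral_eq_Gamma_mul_div _ _ (by simpa) (by simpa)] at h
  apply Complex.ofReal_injective
  rw [← intervalIntegral.integral_ofReal]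
  push_cast
  rw [Complex.ofReal_cpow hx.le]
  simp only [← Complex.Gamma_ofReal]
  push_cast
  rw [← h]
  refine intervalIntegral.integral_congr fun ξ hξ => ?_
  rw [Set.uIcc_of_le hx.le] at hξ
  rw [Complex.ofReal_cpow hξ.1, Complex.ofReal_cpow (sub_nonneg.2 hξ.2)]
  push_cast
  rfl

/-- The integral is nonzero, so integrability holds: the integral of a non-integrable function
is `0` by convention. -/
lemma intervalIntegrable_rpow_mul_sub_rpow {a b x : ℝ} (ha : 0 < a) (hb : 0 < b) (hx : 0 < x) :
    IntervalIntegrable (fun ξ => ξ ^ (a - 1) * (x - ξ) ^ (b - 1)) volume 0 x := by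
  by_contra hne
  have h := integral_rpow_mul_sub_rpow ha hb hx
  rw [intervalIntegral.integral_undef hne] at h
  have := Real.Gamma_pos_of_pos ha
  have := Real.Gamma_pos_of_pos hb
  have := Real.Gamma_pos_of_pos (add_pos ha hb)
  have : 0 < x ^ (a + b - 1) * (Real.Gamma a * Real.Gamma b / Real.Gamma (a + b)) := by positivity
  linarith

/-! ### The Caputo derivative of the relaxation solution -/

/-- The relaxation solution is an eigenfunction of the Caputo derivative. With the Beta integral,
the integrals of the absolute values of the terms again form a Mittag-Leffler series, at
`|B| x^α`, which justifies integrating term by term. -/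
lemma caputo_relaxation {α : ℝ} (B : ℝ) (hα0 : 0 < α) (hα1 : α < 1) {x : ℝ} (hx : 0 < x) :
    caputo α (fun ξ => mittagLeffler α (-B * ξ ^ α)) x = -B * mittagLeffler α (-B * x ^ α) := by
  have hb : 0 < 1 - α := by linarith
  have hGb := Real.Gamma_pos_of_pos hb
  let P : ℕ → ℝ → ℝ := fun m ξ => ξ ^ (α * ((m : ℝ) + 1) - 1) * (x - ξ) ^ (1 - α - 1)
  let c : ℕ → ℝ := fun m => (-B) ^ (m + 1) / Real.Gamma (α * ((m : ℝ) + 1))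
  have hs : ∀ m : ℕ, 0 < α * ((m : ℝ) + 1) := fun m => by positivity
  have hPint : ∀ m, Integrable (P m) (volume.restrict (Set.Ioc 0 x)) := fun m =>
    (intervalIntegrable_iff_integrableOn_Ioc_of_le hx.le).1
      (intervalIntegrable_rpow_mul_sub_rpow (hs m) hb hx)
  have hPval : ∀ m : ℕ, ∫ ξ in Set.Ioc 0 x, P m ξ = Real.Gamma (α * ((m : ℝ) + 1)) *
      Real.Gamma (1 - α) * ((x ^ α) ^ m / Real.Gamma (α * m + 1)) := by
    intro m
    rw [← intervalIntegral.integral_of_le hx.le, integral_rpow_mul_sub_rpow (hs m) hb hx,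
      show α * ((m : ℝ) + 1) + (1 - α) - 1 = α * m by ring,
      show α * ((m : ℝ) + 1) + (1 - α) = α * m + 1 by ring, Real.rpow_mul hx.le, Real.rpow_natCast]
    ring
  have hP0 : ∀ m, ∀ ξ ∈ Set.Ioc 0 x, 0 ≤ P m ξ := fun m ξ hξ =>
    mul_nonneg (Real.rpow_nonneg hξ.1.le _) (Real.rpow_nonneg (sub_nonneg.2 hξ.2) _)
  have hnorm : ∀ m, ∫ ξ in Set.Ioc 0 x, ‖c m * P m ξ‖ =
      |B| * Real.Gamma (1 - α) * ((|B| * x ^ α) ^ m / Real.Gamma (α * m + 1)) := by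
    intro m
    have hG := Real.Gamma_pos_of_pos (hs m)
    have e : ∫ ξ in Set.Ioc 0 x, ‖c m * P m ξ‖ = ∫ ξ in Set.Ioc 0 x, |c m| * P m ξ := by
      refine setIntegral_congr_fun measurableSet_Ioc fun ξ hξ => ?_
      simp only [norm_mul, Real.norm_eq_abs]
      rw [abs_of_nonneg (hP0 m ξ hξ)]
    rw [e, integral_const_mul, hPval, abs_div, abs_pow, abs_neg, abs_of_pos hG, mul_pow, pow_succ]
    field_simp
  have hsum := hasSum_integral_of_summable_integral_norm
    (F := fun m ξ => c m * P m ξ) (μ := volume.restrict (Set.Ioc 0 x))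
    (fun m => (hPint m).const_mul _) (by
      simp only [hnorm]
      exact (summable_mittagLeffler hα0 hα1 _).mul_left _)
  have hval : ∀ m, ∫ ξ in Set.Ioc 0 x, c m * P m ξ =
      Real.Gamma (1 - α) * -B * ((-B * x ^ α) ^ m / Real.Gamma (α * m + 1)) := by
    intro m
    have hG := Real.Gamma_pos_of_pos (hs m)
    rw [integral_const_mul, hPval]
    simp only [c]
    rw [mul_pow, pow_succ]
    field_simp
  have hint : ∫ ξ in (0 : ℝ)..x,
      deriv (fun ξ => mittagLeffler α (-B * ξ ^ α)) ξ * (x - ξ) ^ (-α) =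
      ∫ ξ in Set.Ioc 0 x, ∑' m, c m * P m ξ := by
    rw [intervalIntegral.integral_of_le hx.le]
    refine setIntegral_congr_fun measurableSet_Ioc fun ξ hξ => ?_
    rw [deriv_relaxation B hα0 hα1 hξ.1, ← tsum_mul_right]
    congr 1
    ext m
    simp only [c, P]
    rw [show 1 - α - 1 = -α by ring, mul_assoc]
  rw [caputo, hint, ← hsum.tsum_eq]
  simp only [hval]
  rw [tsum_mul_left, mittagLeffler]
  field_simp

/-- The Caputo derivative at `x > 0` depends only on the values on `(0, ∞)`, and is homogeneous. -/
lemma caputo_eq_of_eqOn_Ioi {α c x : ℝ} {f g : ℝ → ℝ} (h : ∀ ξ, 0 < ξ → f ξ = c * g ξ)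
    (hx : 0 < x) : caputo α f x = c * caputo α g x := by
  have e : ∫ ξ in (0 : ℝ)..x, deriv f ξ * (x - ξ) ^ (-α) =
      ∫ ξ in (0 : ℝ)..x, c * (deriv g ξ * (x - ξ) ^ (-α)) := by
    rw [intervalIntegral.integral_of_le hx.le, intervalIntegral.integral_of_le hx.le]
    refine setIntegral_congr_fun measurableSet_Ioc fun ξ hξ => ?_
    have hfg : f =ᶠ[nhds ξ] fun ξ => c * g ξ := by
      filter_upwards [Ioi_mem_nhds hξ.1] with t ht using h t ht
    rw [hfg.deriv_eq, deriv_const_mul_field, mul_assoc]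
  rw [caputo, caputo, e, intervalIntegral.integral_const_mul]
  ring

/-- Sequential derivatives of the relaxation solution `y(x) = E_α(−B x^α)`:
`D^{nα} y(x) = (−B)^n E_α(−B x^α)` for `x > 0`, and `D^{nα} y(0⁺) = (−B)^n`. -/
theorem millerRoss_relaxation_solution (α B : ℝ) (hα0 : 0 < α) (hα1 : α < 1) :
    ∀ n : ℕ, 1 ≤ n →
      (∀ x : ℝ, 0 < x →
        millerRoss α n (fun ξ => mittagLeffler α (-B * ξ ^ α)) x
          = (-B) ^ n * mittagLeffler α (-B * x ^ α)) ∧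
      Tendsto (millerRoss α n (fun ξ => mittagLeffler α (-B * ξ ^ α)))
        (nhdsWithin 0 (Set.Ioi 0)) (nhds ((-B) ^ n)) := by
  have main : ∀ n : ℕ, ∀ x : ℝ, 0 < x →
      millerRoss α n (fun ξ => mittagLeffler α (-B * ξ ^ α)) x
        = (-B) ^ n * mittagLeffler α (-B * x ^ α) := by
    intro n
    induction n with
    | zero => intro x _; simp [millerRoss]
    | succ k ih =>
      intro x hx
      have e : millerRoss α (k + 1) (fun ξ => mittagLeffler α (-B * ξ ^ α)) =
          caputo α (millerRoss α k (fun ξ => mittagLeffler α (-B * ξ ^ α))) :=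
        Function.iterate_succ_apply' _ _ _
      rw [e, caputo_eq_of_eqOn_Ioi ih hx, caputo_relaxation B hα0 hα1 hx]
      ring
  refine fun n _ => ⟨main n, ?_⟩
  have hcont : Tendsto (fun x : ℝ => (-B) ^ n * mittagLeffler α (-B * x ^ α)) (nhds 0)
      (nhds ((-B) ^ n)) := by
    have h1 : ContinuousAt (fun x : ℝ => -B * x ^ α) 0 :=
      (Real.continuousAt_rpow_const 0 α (Or.inr hα0.le)).const_mul _
    have h2 : ContinuousAt (fun x : ℝ => (-B) ^ n * mittagLeffler α (-B * x ^ α)) 0 :=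
      (ContinuousAt.comp (g := mittagLeffler α)
        (hasDerivAt_mittagLeffler hα0 hα1 _).continuousAt h1).const_mul _
    have h3 := h2.tendsto
    simpa [Real.zero_rpow hα0.ne', mittagLeffler_zero] using h3
  refine (hcont.mono_left nhdsWithin_le_nhds).congr' ?_
  filter_upwards [self_mem_nhdsWithin] with x hx using (main n x hx).symm
end

section
/- Fractional Taylor substitution for the relaxation equation: let 0 < α < 1, B ∈ ℝ, m ≥ 1, and define z(x) = E_α(−B x^α) − ∑_{n=0}^m (−B)^n x^{αn}/Γ(αn+1). Then z(0) = 0 and for every x > 0 the Caputo derivative of order α satisfies D^α z(x) + B z(x) = (−B)^{m+1} x^{αm}/Γ(αm+1). -/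
/-!
For `x ≥ 0` the function `z` is the tail `∑_{n > m} (-B)^n x^{αn} / Γ(αn+1)` of the Mittag-Leffler
series, so `z 0 = 0`. By Euler's Beta integral (`integral_term`), `D^α` sends
`x^{αn} / Γ(αn+1)` to `x^{α(n-1)} / Γ(α(n-1)+1)` for `n ≥ 1`. Applied term by term, `D^α z` is
therefore `-B` times the tail starting at `n = m`, that is, `-B z` plus the claimed right-hand side.

Interchanging the sum with `deriv` (`hasDerivAt_tail`) and with the integral
(`hasSum_integral_tail`) rests on the convergence of the Mittag-Leffler series for every argument
(`summable_ml`), which follows from the super-geometric lower bound `gamma_lower` for `Γ`.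
-/

open Real MeasureTheory

/-- Obtained by restricting Euler's integral to `(R, ∞)`, where `t ^ (s - 1) ≥ R ^ (s - 1)`.
Since `R` is arbitrary, `Γ` grows faster than every geometric sequence. -/
theorem gamma_lower {R s : ℝ} (hR : 0 < R) (hs : 1 ≤ s) :
    R ^ (s - 1) * Real.exp (-R) ≤ Real.Gamma s := by
  have hconv := Real.GammaIntegral_convergent (s := s) (by linarith)
  have hsub : Set.Ioi R ⊆ Set.Ioi (0:ℝ) := Set.Ioi_subset_Ioi hR.le
  rw [Real.Gamma_eq_integral (by linarith), ← integral_exp_neg_Ioi R,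
    ← MeasureTheory.integral_const_mul]
  calc ∫ t in Set.Ioi R, R ^ (s - 1) * Real.exp (-t)
      ≤ ∫ t in Set.Ioi R, Real.exp (-t) * t ^ (s - 1) := by
        refine setIntegral_mono_on ?_ (hconv.mono_set hsub) measurableSet_Ioi ?_
        · exact (integrableOn_exp_neg_Ioi R).const_mul _
        · intro t ht
          rw [mul_comm]
          gcongr
          exact (Set.mem_Ioi.1 ht).le
    _ ≤ _ := by
        refine setIntegral_mono_set hconv ?_ hsub.eventuallyLE
        filter_upwards [ae_restrict_mem measurableSet_Ioi] with t ht
        have : (0:ℝ) < t := ht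
        simp only [Pi.zero_apply]
        positivity

/-- The Mittag-Leffler series converges everywhere: `gamma_lower` with `R ^ α = 2 (|r| + 1)`
compares it with a geometric series of ratio `1 / 2`. -/
theorem summable_ml {α : ℝ} (hα : 0 < α) (r : ℝ) :
    Summable fun n : ℕ => r ^ n / Real.Gamma (α * n + 1) := by
  obtain ⟨R, hR, hRr⟩ : ∃ R : ℝ, 0 < R ∧ R ^ α = 2 * (|r| + 1) :=
    ⟨(2 * (|r| + 1)) ^ α⁻¹, by positivity, Real.rpow_inv_rpow (by positivity) hα.ne'⟩
  refine Summable.of_norm_bounded (g := fun n : ℕ => Real.exp R * (1 / 2) ^ n)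
    ((summable_geometric_of_lt_one (by norm_num) (by norm_num)).mul_left _) fun n => ?_
  have h1 := gamma_lower (s := α * n + 1) hR (by nlinarith [n.cast_nonneg (α := ℝ)])
  rw [add_sub_cancel_right, Real.rpow_mul hR.le, Real.rpow_natCast, hRr] at h1
  have hpos : 0 < (2 * (|r| + 1)) ^ n * Real.exp (-R) := by positivity
  rw [norm_div, norm_pow, Real.norm_eq_abs, Real.norm_of_nonneg (hpos.le.trans h1)]
  calc |r| ^ n / Real.Gamma (α * n + 1)
      ≤ (|r| + 1) ^ n / ((2 * (|r| + 1)) ^ n * Real.exp (-R)) := by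
        gcongr
        linarith
    _ = _ := by
        have : (|r| + 1) ≠ 0 := by positivity
        rw [mul_pow, Real.exp_neg]
        field_simp
        rw [← mul_pow]
        norm_num

/-- Euler's Beta integral on `[0, x]`, over the reals. -/
theorem beta_scaled {s t x : ℝ} (hs : 0 < s) (ht : 0 < t) (hx : 0 < x) :
    ∫ ξ in (0:ℝ)..x, ξ ^ (s - 1) * (x - ξ) ^ (t - 1)
      = x ^ (s + t - 1) * (Real.Gamma s * Real.Gamma t / Real.Gamma (s + t)) := by
  have h := Complex.betaIntegral_scaled s t hx
  rw [Complex.betaIntegral_eq_Gamma_mul_div _ _ (by simpa) (by simpa)] at h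
  have : ∫ ξ in (0:ℝ)..x, (ξ:ℂ) ^ ((s:ℂ) - 1) * ((x:ℂ) - ξ) ^ ((t:ℂ) - 1)
      = ∫ ξ in (0:ℝ)..x, ((ξ ^ (s - 1) * (x - ξ) ^ (t - 1) : ℝ) : ℂ) := by
    refine intervalIntegral.integral_congr fun ξ hξ => ?_
    rw [Set.uIcc_of_le hx.le] at hξ
    push_cast [Complex.ofReal_cpow hξ.1, Complex.ofReal_cpow (sub_nonneg.2 hξ.2)]
    rfl
  rw [this, intervalIntegral.integral_ofReal, ← Complex.ofReal_add, Complex.Gamma_ofReal,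
    Complex.Gamma_ofReal, Complex.Gamma_ofReal, ← Complex.ofReal_one, ← Complex.ofReal_sub,
    ← Complex.ofReal_cpow hx.le] at h
  exact_mod_cast h

theorem mul_rpow_pow {B α x : ℝ} (hx : 0 ≤ x) (n : ℕ) :
    (-B * x ^ α) ^ n = (-B) ^ n * x ^ (α * n) := by
  rw [mul_pow, Real.rpow_mul hx, Real.rpow_natCast]

theorem summable_term {α : ℝ} (hα : 0 < α) (B : ℝ) {x : ℝ} (hx : 0 ≤ x) :
    Summable fun n : ℕ => (-B) ^ n * x ^ (α * n) / Real.Gamma (α * n + 1) := by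
  simpa only [mul_rpow_pow hx] using summable_ml hα (-B * x ^ α)

/-- Termwise differentiation at `x > 0`. The differentiated series is dominated on
`(x / 2, 2 x)`; staying away from `0` matters, because `y ^ (α n - 1)` blows up there when `α n < 1`. -/
theorem hasDerivAt_tail {α : ℝ} (hα : 0 < α) (B : ℝ) (N : ℕ) {x : ℝ} (hx : 0 < x) :
    HasDerivAt (fun y : ℝ => ∑' k : ℕ,
        (-B) ^ (k + N) * y ^ (α * (k + N : ℕ)) / Real.Gamma (α * (k + N : ℕ) + 1))
      (∑' k : ℕ, (-B) ^ (k + N) * (α * (k + N : ℕ) * x ^ (α * (k + N : ℕ) - 1))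
        / Real.Gamma (α * (k + N : ℕ) + 1)) x := by
  have hG : ∀ n : ℕ, 0 < Real.Gamma (α * n + 1) := fun n =>
    Real.Gamma_pos_of_pos (by positivity)
  have hu : Summable fun n : ℕ =>
      α / (x / 2) * ((2 * |B| * (2 * x) ^ α) ^ n / Real.Gamma (α * n + 1)) :=
    (summable_ml hα _).mul_left _
  refine hasDerivAt_tsum_of_isPreconnected (t := Set.Ioo (x / 2) (2 * x)) (y₀ := x)
    (g := fun (k : ℕ) (y : ℝ) =>
      (-B) ^ (k + N) * y ^ (α * (k + N : ℕ)) / Real.Gamma (α * (k + N : ℕ) + 1))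
    (g' := fun (k : ℕ) (y : ℝ) =>
      (-B) ^ (k + N) * (α * (k + N : ℕ) * y ^ (α * (k + N : ℕ) - 1))
        / Real.Gamma (α * (k + N : ℕ) + 1))
    ((summable_nat_add_iff N).2 hu) isOpen_Ioo isPreconnected_Ioo (fun k y hy => ?_)
    (fun k y hy => ?_) ⟨by linarith, by linarith⟩
    ((summable_nat_add_iff N).2 (summable_term hα B hx.le)) ⟨by linarith, by linarith⟩
  · have hy0 : y ≠ 0 := by linarith [hy.1]
    exact ((Real.hasDerivAt_rpow_const (Or.inl hy0)).const_mul _).div_const _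
  · generalize k + N = n
    have hy0 : 0 < y := by linarith [hy.1]
    -- The factor `n` from differentiation is absorbed by doubling the ratio of the series.
    have hn : (n : ℝ) ≤ 2 ^ n := by exact_mod_cast n.lt_two_pow_self.le
    have hA : 0 ≤ α * n * y ^ (α * n - 1) := by positivity
    rw [Real.norm_eq_abs, abs_div, abs_mul, abs_pow, abs_neg, abs_of_pos (hG n),
      abs_of_nonneg hA, Real.rpow_sub_one hy0.ne']
    calc |B| ^ n * (α * n * (y ^ (α * n) / y)) / Real.Gamma (α * n + 1)
        ≤ |B| ^ n * (α * 2 ^ n * ((2 * x) ^ (α * n) / (x / 2))) / Real.Gamma (α * n + 1) := by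
          have := hG n
          gcongr
          · exact hy.2.le
          · exact hy.1.le
      _ = _ := by
          rw [Real.rpow_mul (by positivity), Real.rpow_natCast]
          ring

/-- Up to the factor `Γ (1 - α)`, the Caputo derivative lowers the normalized monomial
`x ^ (α (j + 1)) / Γ (α (j + 1) + 1)` to `x ^ (α j) / Γ (α j + 1)`. -/
theorem integral_term {α : ℝ} (hα0 : 0 < α) (hα1 : α < 1) (j : ℕ) {x : ℝ} (hx : 0 < x) :
    ∫ ξ in (0:ℝ)..x, α * (j + 1 : ℕ) * ξ ^ (α * (j + 1 : ℕ) - 1)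
        / Real.Gamma (α * (j + 1 : ℕ) + 1) * (x - ξ) ^ (-α)
      = Real.Gamma (1 - α) * (x ^ (α * j) / Real.Gamma (α * j + 1)) := by
  have hs : 0 < α * (j + 1 : ℕ) := by positivity
  have h := beta_scaled hs (sub_pos.2 hα1) hx
  have e : α * (j + 1 : ℕ) + (1 - α) = α * j + 1 := by push_cast; ring
  rw [e, add_sub_cancel_right, show 1 - α - 1 = -α by ring] at h
  have hG := (Real.Gamma_pos_of_pos hs).ne'
  calc _ = ∫ ξ in (0:ℝ)..x, (1 / Real.Gamma (α * (j + 1 : ℕ))) *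
        (ξ ^ (α * (j + 1 : ℕ) - 1) * (x - ξ) ^ (-α)) := by
        congr 1 with ξ
        rw [Real.Gamma_add_one hs.ne']
        field_simp
    _ = _ := by
        rw [intervalIntegral.integral_const_mul, h]
        field_simp

/-- Termwise integration of the differentiated tail against the Caputo kernel. It is
justified by the summability of the `L¹` norms, which by `integral_term` are, up to a constant, the
terms of a Mittag-Leffler series with `|B|` in place of `-B`. -/
theorem hasSum_integral_tail {α : ℝ} (hα0 : 0 < α) (hα1 : α < 1) (B : ℝ) (m : ℕ)
    {x : ℝ} (hx : 0 < x) :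
    HasSum (fun k : ℕ => (-B) ^ (k + m + 1) *
        (Real.Gamma (1 - α) * (x ^ (α * (k + m : ℕ)) / Real.Gamma (α * (k + m : ℕ) + 1))))
      (∫ ξ in (0:ℝ)..x, (∑' k : ℕ, (-B) ^ (k + (m + 1)) *
        (α * (k + (m + 1) : ℕ) * ξ ^ (α * (k + (m + 1) : ℕ) - 1))
        / Real.Gamma (α * (k + (m + 1) : ℕ) + 1)) * (x - ξ) ^ (-α)) := by
  set F : ℕ → ℝ → ℝ := fun j ξ => α * (j + 1 : ℕ) * ξ ^ (α * (j + 1 : ℕ) - 1)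
        / Real.Gamma (α * (j + 1 : ℕ) + 1) * (x - ξ) ^ (-α) with hF
  have hI := fun j => integral_term hα0 hα1 j hx
  have hΓ := Real.Gamma_pos_of_pos (sub_pos.2 hα1)
  have hG : ∀ n : ℕ, 0 < Real.Gamma (α * n + 1) := fun n =>
    Real.Gamma_pos_of_pos (by positivity)
  -- The Bochner integral of a non-integrable function is `0`, so a nonzero integral
  -- forces integrability.
  have hFint : ∀ j, IntervalIntegrable (F j) volume 0 x := fun j => by
    refine intervalIntegral.intervalIntegrable_of_integral_ne_zero ?_
    rw [hI]
    have := hG j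
    positivity
  have hnonneg : ∀ j, ∀ ξ ∈ Set.Ioc 0 x, 0 ≤ F j ξ := fun j ξ hξ => by
    have h1 := hξ.1
    have h2 : 0 ≤ x - ξ := sub_nonneg.2 hξ.2
    have h3 := hG (j + 1)
    simp only [hF]
    positivity
  have hnorm : ∀ k : ℕ, ∫ ξ in Set.Ioc 0 x, ‖(-B) ^ (k + m + 1) * F (k + m) ξ‖
      = |B| ^ (k + m + 1) * (Real.Gamma (1 - α) *
          (x ^ (α * (k + m : ℕ)) / Real.Gamma (α * (k + m : ℕ) + 1))) := fun k => by
    rw [← hI, intervalIntegral.integral_of_le hx.le, ← MeasureTheory.integral_const_mul]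
    refine setIntegral_congr_fun measurableSet_Ioc fun ξ hξ => ?_
    simp only [norm_mul, Real.norm_of_nonneg (hnonneg _ _ hξ)]
    simp [hF]
  have key := hasSum_integral_of_summable_integral_norm
    (μ := volume.restrict (Set.Ioc 0 x)) (F := fun k ξ => (-B) ^ (k + m + 1) * F (k + m) ξ)
    (fun k => ((intervalIntegrable_iff_integrableOn_Ioc_of_le hx.le).1 (hFint _)).const_mul _) (by
      simp only [hnorm]
      have := ((summable_nat_add_iff m).2 (summable_term hα0 (-|B|) hx.le)).mul_left
        (|B| * Real.Gamma (1 - α))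
      refine this.congr fun k => ?_
      rw [neg_neg]
      ring)
  simp only [MeasureTheory.integral_const_mul] at key
  simp only [← intervalIntegral.integral_of_le hx.le, hF, hI] at key
  refine (congrArg (HasSum _) ?_).mp key
  refine intervalIntegral.integral_congr fun ξ _ => ?_
  simp only [← tsum_mul_right]
  refine tsum_congr fun k => ?_
  rw [← add_assoc]
  ring

/-- Fractional Taylor substitution for the relaxation equation:
`z(x) = E_α(−B x^α) − ∑_{n=0}^m (−B)^n x^{αn}/Γ(αn+1)` satisfies `z(0) = 0`
and `D^α z(x) + B z(x) = (−B)^{m+1} x^{αm}/Γ(αm+1)` for `x > 0`. -/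
theorem fractional_taylor_substitution_relaxation (α B : ℝ)
    (hα0 : 0 < α) (hα1 : α < 1) (m : ℕ) (hm : 1 ≤ m)
    (z : ℝ → ℝ)
    (hz : ∀ x : ℝ, z x = mittagLeffler α (-B * x ^ α)
      - ∑ n ∈ Finset.range (m + 1),
          (-B) ^ n * x ^ (α * n) / Real.Gamma (α * n + 1)) :
    z 0 = 0 ∧ ∀ x : ℝ, 0 < x →
      caputo α z x + B * z x
        = (-B) ^ (m + 1) * x ^ (α * m) / Real.Gamma (α * m + 1) := by
  have htail : ∀ x : ℝ, 0 ≤ x → z x = ∑' k : ℕ, (-B) ^ (k + (m + 1)) *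
      x ^ (α * (k + (m + 1) : ℕ)) / Real.Gamma (α * (k + (m + 1) : ℕ) + 1) := fun x hx => by
    have h := (summable_term hα0 B hx).sum_add_tsum_nat_add (m + 1)
    rw [hz, mittagLeffler]
    simp only [mul_rpow_pow hx]
    rw [← h, add_sub_cancel_left]
  refine ⟨?_, fun x hx => ?_⟩
  · rw [htail 0 le_rfl]
    refine (tsum_congr fun k => ?_).trans tsum_zero
    rw [Real.zero_rpow (by positivity), mul_zero, zero_div]
  · have hΓ := (Real.Gamma_pos_of_pos (sub_pos.2 hα1)).ne'
    have hderiv : ∀ ξ, 0 < ξ → deriv z ξ = ∑' k : ℕ, (-B) ^ (k + (m + 1)) *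
        (α * (k + (m + 1) : ℕ) * ξ ^ (α * (k + (m + 1) : ℕ) - 1))
        / Real.Gamma (α * (k + (m + 1) : ℕ) + 1) := fun ξ hξ => by
      refine ((hasDerivAt_tail hα0 B (m + 1) hξ).congr_of_eventuallyEq ?_).deriv
      filter_upwards [lt_mem_nhds hξ] with y hy using htail y hy.le
    have hcap : caputo α z x = ∑' k : ℕ, (-B) * ((-B) ^ (k + m) * x ^ (α * (k + m : ℕ))
        / Real.Gamma (α * (k + m : ℕ) + 1)) := by
      have h := (hasSum_integral_tail hα0 hα1 B m hx).mul_left (1 / Real.Gamma (1 - α))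
      have hcongr := setIntegral_congr_fun (μ := volume) (E := ℝ)
        (measurableSet_Ioc (a := (0:ℝ)) (b := x)) fun ξ hξ => congrArg (· * (x - ξ) ^ (-α)) (hderiv ξ hξ.1)
      rw [← intervalIntegral.integral_of_le hx.le, ← intervalIntegral.integral_of_le hx.le]
        at hcongr
      rw [caputo, hcongr, ← h.tsum_eq]
      refine tsum_congr fun k => ?_
      field_simp
      ring
    have hsplit := ((summable_nat_add_iff m).2 (summable_term hα0 B hx.le)).tsum_eq_zero_add
    have hshift : ∀ k : ℕ, k + 1 + m = k + (m + 1) := fun k => by ring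
    simp only [hshift, zero_add] at hsplit
    rw [hcap, tsum_mul_left, hsplit, ← htail x hx.le]
    ring
end
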